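/- Let n ≥ 3, let F_y = (e_{n-1}+e_n ⊂ e_1 ⊂ ⋯ ⊂ e_{n-2} ⊂ e_n), let B_{n-1} = {g ∈ K : g U_k = U_k for all 1 ≤ k ≤ n-1} (a Borel subgroup of K), let B_{n-2} = {g ∈ GL(n,ℂ) : g e_{n-1} = e_{n-1}, g e_n = e_n, and g U_k = U_k for all 1 ≤ k ≤ n-2}, and let E = (U_1 ⊂ U_2 ⊂ ⋯ ⊂ U_{n-1}) be the standard complete flag of the subspace U_{n-1}. Then for all k, k' ∈ K one has B_{n-1}·(k·F_y) = B_{n-1}·(k'·F_y) if and only if B_{n-2}·(k^{-1}·E) = B_{n-2}·(k'^{-1}·E); consequently the assignment B_{n-1}·(k·F_y) ↦ B_{n-2}·(k^{-1}·E) is a well-defined bijection from the set of B_{n-1}-orbits on the K-orbit of F_y onto the set of B_{n-2}-orbits on the set of complete flags of U_{n-1} (chains 0 = W_0 ⊂ W_1 ⊂ ⋯ ⊂ W_{n-1} = U_{n-1} with dim W_k = k). -/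

import Mathlib

open Module Submodule

noncomputable section

/-- `stdVec n m` is the `m`-th standard basis vector of `ℂ^n` (1-indexed); `0` out of range. -/
def stdVec (n m : ℕ) : Fin n → ℂ :=
  if h : 1 ≤ m ∧ m ≤ n then Pi.single (⟨m - 1, by omega⟩ : Fin n) 1 else 0

/-- `stdSub n k` is the subspace `U_k = span(e_1, …, e_k)` of `ℂ^n`. -/
def stdSub (n k : ℕ) : Submodule ℂ (Fin n → ℂ) :=
  span ℂ (stdVec n '' Set.Icc 1 k)

/-- The action of an invertible linear map of `ℂ^n` on a chain of subspaces. -/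
def actFlag (n : ℕ) (g : (Fin n → ℂ) ≃ₗ[ℂ] (Fin n → ℂ))
    (V : ℕ → Submodule ℂ (Fin n → ℂ)) (k : ℕ) : Submodule ℂ (Fin n → ℂ) :=
  Submodule.map g.toLinearMap (V k)

/-- The orbit of the chain `V` under a set `B` of invertible linear maps. -/
def orbitOf (n : ℕ) (B : Set ((Fin n → ℂ) ≃ₗ[ℂ] (Fin n → ℂ)))
    (V : ℕ → Submodule ℂ (Fin n → ℂ)) : Set (ℕ → Submodule ℂ (Fin n → ℂ)) :=
  {V' | ∃ b ∈ B, actFlag n b V = V'}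

/-- A complete flag in `ℂ^n`: `V k` is the `k`-dimensional member for `0 ≤ k ≤ n`;
values above `n` are pinned so that two flags are equal iff they agree in degrees `≤ n`. -/
def IsCompleteFlag (n : ℕ) (V : ℕ → Submodule ℂ (Fin n → ℂ)) : Prop :=
  (∀ k, k ≤ n → finrank ℂ ↥(V k) = k) ∧ (∀ k, V k ≤ V (k + 1)) ∧ (∀ k, n ≤ k → V k = V n)

/-- The complete flag `(v 1 ⊂ v 2 ⊂ ⋯ ⊂ v n)` spanned by the vectors `v 1, …, v n`. -/
def flagOf (n : ℕ) (v : ℕ → Fin n → ℂ) (k : ℕ) : Submodule ℂ (Fin n → ℂ) :=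
  span ℂ (v '' Set.Icc 1 (min k n))

/-- `K = {g ∈ GL(n,ℂ) : g e_n = e_n, g U_{n-1} = U_{n-1}}`, a copy of `GL(n-1,ℂ)`. -/
def Ksub (n : ℕ) : Set ((Fin n → ℂ) ≃ₗ[ℂ] (Fin n → ℂ)) :=
  {g | g (stdVec n n) = stdVec n n ∧
       Submodule.map g.toLinearMap (stdSub n (n - 1)) = stdSub n (n - 1)}

/-- `V'` lies in the `K`-orbit of `V`. -/
def InKOrbit (n : ℕ) (V V' : ℕ → Submodule ℂ (Fin n → ℂ)) : Prop :=
  ∃ g ∈ Ksub n, actFlag n g V = V'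

/-- Vectors of the representative flags: for `i = j` this gives the flag `F_i`
`(e_1 ⊂ ⋯ ⊂ e_{i-1} ⊂ e_n ⊂ e_i ⊂ ⋯ ⊂ e_{n-1})` (`e_n` in position `i`), and for
`i < j` the flag `F_{i,j}`
`(e_1 ⊂ ⋯ ⊂ e_{i-1} ⊂ e_i + e_n ⊂ e_{i+1} ⊂ ⋯ ⊂ e_{j-1} ⊂ e_n ⊂ e_j ⊂ ⋯ ⊂ e_{n-1})`. -/
def repVec (n i j m : ℕ) : Fin n → ℂ :=
  if m < i then stdVec n m
  else if m = i then (if i < j then stdVec n i else 0) + stdVec n n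
  else if m < j then stdVec n m
  else if m = j then stdVec n n
  else stdVec n (m - 1)

/-- `repFlag n i i = F_i` and `repFlag n i j = F_{i,j}` for `i < j`. -/
def repFlag (n i j : ℕ) : ℕ → Submodule ℂ (Fin n → ℂ) := flagOf n (repVec n i j)

/-- The flag `F_y = (e_{n-1} + e_n ⊂ e_1 ⊂ e_2 ⊂ ⋯ ⊂ e_{n-2} ⊂ e_n)`. -/
def FyVec (n m : ℕ) : Fin n → ℂ :=
  if m = 1 then stdVec n (n - 1) + stdVec n n
  else if m = n then stdVec n n
  else stdVec n (m - 1)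

def FyFlag (n : ℕ) : ℕ → Submodule ℂ (Fin n → ℂ) := flagOf n (FyVec n)

/-- `B_{n-1} = {g ∈ K : g U_k = U_k, 1 ≤ k ≤ n-1}`, a Borel subgroup of `K`. -/
def BFull (n : ℕ) : Set ((Fin n → ℂ) ≃ₗ[ℂ] (Fin n → ℂ)) :=
  {g | g ∈ Ksub n ∧ ∀ k, 1 ≤ k → k ≤ n - 1 →
    Submodule.map g.toLinearMap (stdSub n k) = stdSub n k}

/-- `B_{n-2} = {g ∈ GL(n,ℂ) : g e_{n-1} = e_{n-1}, g e_n = e_n, g U_k = U_k (1 ≤ k ≤ n-2)}`. -/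
def BSmall (n : ℕ) : Set ((Fin n → ℂ) ≃ₗ[ℂ] (Fin n → ℂ)) :=
  {g | g (stdVec n (n - 1)) = stdVec n (n - 1) ∧ g (stdVec n n) = stdVec n n ∧
       ∀ k, 1 ≤ k → k ≤ n - 2 → Submodule.map g.toLinearMap (stdSub n k) = stdSub n k}

/-- The standard complete flag `E = (U_1 ⊂ U_2 ⊂ ⋯ ⊂ U_{n-1})` of the subspace `U_{n-1}`. -/
def EFlag (n k : ℕ) : Submodule ℂ (Fin n → ℂ) := stdSub n (min k (n - 1))

/-- Complete flags of the subspace `U_{n-1}`: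
chains `0 = W_0 ⊂ W_1 ⊂ ⋯ ⊂ W_{n-1} = U_{n-1}` with `dim W_k = k`. -/
def IsFlagOfU (n : ℕ) (W : ℕ → Submodule ℂ (Fin n → ℂ)) : Prop :=
  (∀ k, k ≤ n - 1 → finrank ℂ ↥(W k) = k) ∧ (∀ k, W k ≤ W (k + 1)) ∧
    (∀ k, n - 1 ≤ k → W k = W (n - 1)) ∧ W (n - 1) = stdSub n (n - 1)

abbrev GLn (n : ℕ) := (Fin n → ℂ) ≃ₗ[ℂ] (Fin n → ℂ)

theorem actFlag_trans (n : ℕ) (g h : GLn n) (V : ℕ → Submodule ℂ (Fin n → ℂ)) :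
    actFlag n (g.trans h) V = actFlag n h (actFlag n g V) := by
  funext k
  exact Submodule.map_comp g.toLinearMap h.toLinearMap (V k)

theorem actFlag_refl (n : ℕ) (V : ℕ → Submodule ℂ (Fin n → ℂ)) :
    actFlag n (LinearEquiv.refl ℂ _) V = V := by
  funext k
  exact Submodule.map_id (V k)

theorem actFlag_eq_symm {n : ℕ} {g : GLn n} {V W : ℕ → Submodule ℂ (Fin n → ℂ)}
    (h : actFlag n g V = W) : actFlag n g.symm W = V := by
  rw [← h, ← actFlag_trans, LinearEquiv.self_trans_symm, actFlag_refl]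

theorem map_symm_eq {n : ℕ} {g : GLn n} {V W : Submodule ℂ (Fin n → ℂ)}
    (h : Submodule.map g.toLinearMap V = W) : Submodule.map g.symm.toLinearMap W = V :=
  congrFun (actFlag_eq_symm (g := g) (V := fun _ => V) (W := fun _ => W) (funext fun _ => h)) 0

structure IsGrp (n : ℕ) (B : Set (GLn n)) : Prop where
  one : LinearEquiv.refl ℂ _ ∈ B
  symm : ∀ g ∈ B, g.symm ∈ B
  trans : ∀ g ∈ B, ∀ h ∈ B, g.trans h ∈ B

theorem orbit_eq_iff {n : ℕ} {B : Set (GLn n)} (hB : IsGrp n B)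
    (V W : ℕ → Submodule ℂ (Fin n → ℂ)) :
    orbitOf n B V = orbitOf n B W ↔ ∃ b ∈ B, actFlag n b V = W := by
  constructor
  · intro h
    have : W ∈ orbitOf n B W := ⟨_, hB.one, actFlag_refl n W⟩
    rw [← h] at this
    exact this
  · rintro ⟨b, hb, rfl⟩
    ext X
    constructor
    · rintro ⟨c, hc, rfl⟩
      refine ⟨b.symm.trans c, hB.trans _ (hB.symm _ hb) _ hc, ?_⟩
      rw [actFlag_trans, actFlag_eq_symm rfl]
    · rintro ⟨c, hc, rfl⟩
      exact ⟨b.trans c, hB.trans _ hb _ hc, actFlag_trans _ _ _ _⟩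

theorem K_grp (n : ℕ) : IsGrp n (Ksub n) where
  one := ⟨rfl, Submodule.map_id _⟩
  symm := fun g hg => ⟨by rw [LinearEquiv.symm_apply_eq, hg.1], map_symm_eq hg.2⟩
  trans := fun g hg h hh => ⟨by rw [LinearEquiv.trans_apply, hg.1, hh.1], by
    have := Submodule.map_comp g.toLinearMap h.toLinearMap (stdSub n (n - 1))
    rw [hg.2, hh.2] at this
    exact this⟩

theorem stab_grp {n : ℕ} {B : Set (GLn n)} (F : ℕ → Submodule ℂ (Fin n → ℂ))
    (hB : ∀ g, g ∈ B ↔ g ∈ Ksub n ∧ actFlag n g F = F) : IsGrp n B where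
  one := (hB _).2 ⟨(K_grp n).one, actFlag_refl n F⟩
  symm := fun g hg => (hB _).2 ⟨(K_grp n).symm _ ((hB _).1 hg).1, actFlag_eq_symm ((hB _).1 hg).2⟩
  trans := fun g hg h hh => (hB _).2 ⟨(K_grp n).trans _ ((hB _).1 hg).1 _ ((hB _).1 hh).1, by
    rw [actFlag_trans, ((hB _).1 hg).2, ((hB _).1 hh).2]⟩

theorem stdVec_apply {n m : ℕ} (h1 : 1 ≤ m) (h2 : m ≤ n) (i : Fin n) :
    stdVec n m i = if (i : ℕ) + 1 = m then 1 else 0 := by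
  unfold stdVec
  rw [dif_pos ⟨h1, h2⟩, Pi.single_apply]
  congr 1
  rw [Fin.ext_iff]
  simp only [eq_iff_iff]
  omega

theorem stdVec_mem {n m k : ℕ} (h1 : 1 ≤ m) (h2 : m ≤ k) : stdVec n m ∈ stdSub n k :=
  subset_span ⟨m, ⟨h1, h2⟩, rfl⟩

theorem mem_stdSub {n k : ℕ} (hk : k ≤ n) (x : Fin n → ℂ) :
    x ∈ stdSub n k ↔ ∀ i : Fin n, k ≤ (i : ℕ) → x i = 0 := by
  constructor
  · intro hx i hi
    induction hx using Submodule.span_induction with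
    | mem x h =>
      obtain ⟨m, ⟨h1, h2⟩, rfl⟩ := h
      rw [stdVec_apply h1 (h2.trans hk), if_neg (by omega)]
    | zero => rfl
    | add x y _ _ h1 h2 => simp [h1, h2]
    | smul a x _ h => simp [h]
  · intro h
    have hx : x = ∑ i : Fin n, x i • stdVec n ((i : ℕ) + 1) := by
      funext j
      rw [Finset.sum_apply, Finset.sum_eq_single j]
      · rw [Pi.smul_apply, stdVec_apply (by omega) (by omega)]; simp
      · intro b _ hb
        rw [Pi.smul_apply, stdVec_apply (by omega) (by omega), if_neg]
        · simp
        · intro hh; apply hb; ext; omega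
      · simp
    rw [hx]
    refine Submodule.sum_mem _ fun i _ => ?_
    by_cases hi : k ≤ (i : ℕ)
    · rw [h i hi, zero_smul]; exact zero_mem _
    · exact Submodule.smul_mem _ _ (stdVec_mem (by omega) (by omega))

theorem stdSub_zero (n : ℕ) : stdSub n 0 = ⊥ := by
  unfold stdSub
  simp

theorem stdSub_top (n : ℕ) : stdSub n n = ⊤ := by
  rw [eq_top_iff]
  intro x _
  rw [mem_stdSub le_rfl]
  intro i hi
  omega

theorem Icc_one_succ (k : ℕ) : Set.Icc 1 (k + 1) = insert (k + 1) (Set.Icc 1 k) := by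
  ext m
  simp only [Set.mem_Icc, Set.mem_insert_iff]
  omega

theorem stdSub_succ (n k : ℕ) :
    stdSub n (k + 1) = span ℂ {stdVec n (k + 1)} ⊔ stdSub n k := by
  unfold stdSub
  rw [Icc_one_succ, Set.image_insert_eq, Submodule.span_insert]

theorem BFull_iff {n : ℕ} (g : GLn n) :
    g ∈ BFull n ↔ g ∈ Ksub n ∧ actFlag n g (EFlag n) = EFlag n := by
  unfold BFull
  refine and_congr_right fun hg => ?_
  constructor
  · intro h
    funext k
    unfold actFlag EFlag
    by_cases hk : min k (n - 1) = 0
    · rw [hk, stdSub_zero, Submodule.map_bot]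
    · exact h _ (by omega) (by omega)
  · intro h k h1 h2
    have := congrFun h k
    unfold actFlag EFlag at this
    rwa [min_eq_left h2] at this

theorem Fy_zero (n : ℕ) : FyFlag n 0 = ⊥ := by
  simp [FyFlag, flagOf]

theorem Fy_mid {n : ℕ} (hn : 3 ≤ n) (j : ℕ) (hj : j + 2 ≤ n) :
    FyFlag n (j + 1) = span ℂ {stdVec n (n - 1) + stdVec n n} ⊔ stdSub n j := by
  induction j with
  | zero =>
    rw [stdSub_zero, sup_bot_eq]
    unfold FyFlag flagOf
    rw [min_eq_left (by omega)]
    simp [FyVec]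
  | succ j ih =>
    have h := ih (by omega)
    unfold FyFlag flagOf at h ⊢
    rw [min_eq_left (by omega)] at h ⊢
    rw [Icc_one_succ, Set.image_insert_eq, Submodule.span_insert, h, stdSub_succ]
    rw [FyVec, if_neg (by omega), if_neg (by omega)]
    simp only [Nat.add_sub_cancel]
    rw [sup_left_comm]

theorem Fy_top {n : ℕ} (hn : 3 ≤ n) (k : ℕ) (hk : n ≤ k) : FyFlag n k = ⊤ := by
  have hs : FyFlag n k = FyFlag n n := by
    unfold FyFlag flagOf
    rw [min_eq_right hk, min_self]
  have hmem : ∀ m, 1 ≤ m → m ≤ n → FyVec n m ∈ FyFlag n n := fun m h1 h2 =>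
    subset_span ⟨m, ⟨h1, by rwa [min_self]⟩, rfl⟩
  rw [hs, ← top_le_iff, ← stdSub_top n]
  refine Submodule.span_le.2 ?_
  rintro _ ⟨m, ⟨h1, h2⟩, rfl⟩
  have hnn : stdVec n n ∈ FyFlag n n := by
    have := hmem n (by omega) le_rfl
    rwa [FyVec, if_neg (by omega), if_pos rfl] at this
  by_cases hm : m = n
  · rw [hm]; exact hnn
  by_cases hm' : m = n - 1
  · have := Submodule.sub_mem _ (hmem 1 le_rfl (by omega)) hnn
    rw [FyVec, if_pos rfl, add_sub_cancel_right] at this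
    rw [hm']; exact this
  · have := hmem (m + 1) (by omega) (by omega)
    rw [FyVec, if_neg (by omega), if_neg (by omega)] at this
    exact this

theorem Fy_inf {n : ℕ} (hn : 3 ≤ n) (j : ℕ) (hj : j + 2 ≤ n) :
    FyFlag n (j + 1) ⊓ stdSub n (n - 1) = stdSub n j := by
  rw [Fy_mid hn j hj]
  apply le_antisymm
  · rintro x ⟨hx, hx'⟩
    obtain ⟨y, hy, u, hu, rfl⟩ := Submodule.mem_sup.1 hx
    obtain ⟨c, rfl⟩ := Submodule.mem_span_singleton.1 hy
    have h0 := (mem_stdSub (by omega) _).1 hx' ⟨n - 1, by omega⟩ le_rfl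
    have h1 := (mem_stdSub (by omega) _).1 hu ⟨n - 1, by omega⟩ (by simp only []; omega)
    rw [Pi.add_apply, h1, Pi.smul_apply, Pi.add_apply, stdVec_apply (by omega) (by omega),
      stdVec_apply (by omega) (by omega), if_neg (by simp only []; omega),
      if_pos (by simp only []; omega)] at h0
    have : c = 0 := by simpa using h0
    rw [this, zero_smul, zero_add]
    exact hu
  · refine le_inf le_sup_right ?_
    exact Submodule.span_mono (Set.image_mono (Set.Icc_subset_Icc_right (by omega)))

theorem BSmall_iff {n : ℕ} (hn : 3 ≤ n) (g : GLn n) :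
    g ∈ BSmall n ↔ g ∈ Ksub n ∧ actFlag n g (FyFlag n) = FyFlag n := by
  constructor
  · rintro ⟨h1, h2, h3⟩
    refine ⟨⟨h2, ?_⟩, ?_⟩
    · obtain ⟨m, rfl⟩ : ∃ m, n = m + 2 := ⟨n - 2, by omega⟩
      have h4 := h3 m (by omega) (by omega)
      simp only [Nat.add_succ_sub_one] at h1 ⊢
      rw [stdSub_succ, Submodule.map_sup, h4, Submodule.map_span, Set.image_singleton]
      congr 3
    · funext k
      unfold actFlag
      rcases Nat.eq_zero_or_pos k with hk | hk
      · rw [hk, Fy_zero, Submodule.map_bot]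
      by_cases hk' : n ≤ k
      · rw [Fy_top hn k hk', Submodule.map_top]
        exact LinearMap.range_eq_top.2 g.surjective
      · obtain ⟨j, rfl⟩ : ∃ j, k = j + 1 := ⟨k - 1, by omega⟩
        have hj : Submodule.map g.toLinearMap (stdSub n j) = stdSub n j := by
          rcases Nat.eq_zero_or_pos j with hj | hj
          · rw [hj, stdSub_zero, Submodule.map_bot]
          · exact h3 j hj (by omega)
        rw [Fy_mid hn j (by omega), Submodule.map_sup, hj, Submodule.map_span,
          Set.image_singleton]
        congr 3
        simp [h1, h2]
  · rintro ⟨⟨h1, h2⟩, h3⟩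
    refine ⟨?_, h1, ?_⟩
    · have hF : FyFlag n 1 = span ℂ {stdVec n (n - 1) + stdVec n n} := by
        have := Fy_mid hn 0 (by omega)
        rwa [stdSub_zero, sup_bot_eq] at this
      have h4 : g (stdVec n (n - 1) + stdVec n n) ∈ FyFlag n 1 := by
        rw [← h3]
        refine Submodule.mem_map_of_mem (f := g.toLinearMap) ?_
        rw [hF]
        exact Submodule.mem_span_singleton_self _
      rw [hF] at h4
      obtain ⟨c, hc⟩ := Submodule.mem_span_singleton.1 h4
      have h5 : g (stdVec n (n - 1)) ∈ stdSub n (n - 1) := by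
        rw [← h2]
        exact Submodule.mem_map_of_mem (f := g.toLinearMap) (stdVec_mem (by omega) le_rfl)
      have h6 := (mem_stdSub (by omega) _).1 h5 ⟨n - 1, by omega⟩ le_rfl
      rw [map_add, h1] at hc
      have h7 := congrFun hc ⟨n - 1, by omega⟩
      rw [Pi.add_apply, h6, Pi.smul_apply, Pi.add_apply, stdVec_apply (by omega) (by omega),
        stdVec_apply (by omega) (by omega), if_neg (by simp only []; omega),
        if_pos (by simp only []; omega)] at h7
      have : c = 1 := by simpa using h7
      rw [this, one_smul] at hc
      exact (add_right_cancel hc).symm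
    · intro k hk1 hk2
      rw [← Fy_inf hn k (by omega), Submodule.map_inf _ g.injective, h2]
      congr 1
      exact congrFun h3 (k + 1)

theorem exists_K {n : ℕ} (hn : 3 ≤ n) (W : ℕ → Submodule ℂ (Fin n → ℂ)) (hW : IsFlagOfU n W) :
    ∃ g ∈ Ksub n, actFlag n g (EFlag n) = W := by
  obtain ⟨hd, hm, hc, ht⟩ := hW
  have hw : ∀ k, ∃ w : Fin n → ℂ, k + 1 ≤ n - 1 → w ∈ W (k + 1) ∧ w ∉ W k := by
    intro k
    by_cases hk : k + 1 ≤ n - 1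
    · have hlt : W k < W (k + 1) := by
        refine lt_of_le_of_ne (hm k) fun h => ?_
        have h1 := hd k (by omega)
        rw [h, hd (k + 1) hk] at h1
        omega
      obtain ⟨w, h1, h2⟩ := SetLike.exists_of_lt hlt
      exact ⟨w, fun _ => ⟨h1, h2⟩⟩
    · exact ⟨0, fun h => absurd h hk⟩
  choose w hw using hw
  let v : ℕ → Fin n → ℂ := fun m => if m = n then stdVec n n else w (m - 1)
  have hspan : ∀ k, k ≤ n - 1 → span ℂ (v '' Set.Icc 1 k) = W k := by
    intro k
    induction k with
    | zero =>
      intro _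
      have := Submodule.finrank_eq_zero.1 (hd 0 (by omega))
      rw [this]; simp
    | succ k ih =>
      intro hk
      have hv : v (k + 1) = w k := by simp only [v]; rw [if_neg (by omega)]; rfl
      rw [Icc_one_succ, Set.image_insert_eq, Submodule.span_insert, ih (by omega), hv]
      have hle : span ℂ {w k} ⊔ W k ≤ W (k + 1) := by
        refine sup_le ?_ (hm k)
        rw [Submodule.span_singleton_le_iff_mem]
        exact (hw k hk).1
      refine Submodule.eq_of_le_of_finrank_le hle ?_
      have hlt : W k < span ℂ {w k} ⊔ W k := by
        refine lt_of_le_of_ne le_sup_right fun h => (hw k hk).2 ?_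
        rw [h]
        exact Submodule.mem_sup_left (Submodule.mem_span_singleton_self _)
      have := Submodule.finrank_lt_finrank_of_lt hlt
      rw [hd k (by omega)] at this
      rw [hd (k + 1) hk]
      omega
  let f : (Fin n → ℂ) →ₗ[ℂ] (Fin n → ℂ) :=
    (Pi.basisFun ℂ (Fin n)).constr ℂ (fun i => v ((i : ℕ) + 1))
  have hf : ∀ m, 1 ≤ m → m ≤ n → f (stdVec n m) = v m := by
    intro m h1 h2
    have : stdVec n m = Pi.basisFun ℂ (Fin n) ⟨m - 1, by omega⟩ := by
      rw [Pi.basisFun_apply, stdVec, dif_pos ⟨h1, h2⟩]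
    rw [this, Module.Basis.constr_basis]
    simp only []
    congr 1
    omega
  have hmap : ∀ k, k ≤ n → Submodule.map f (stdSub n k) = span ℂ (v '' Set.Icc 1 k) := by
    intro k hk
    unfold stdSub
    rw [Submodule.map_span, ← Set.image_comp]
    congr 1
    exact Set.image_congr fun m hm => hf m hm.1 (hm.2.trans hk)
  have hvn : v n = stdVec n n := by simp [v]
  have hsurj : Function.Surjective f := by
    rw [← LinearMap.range_eq_top, ← Submodule.map_top, ← stdSub_top n, hmap n le_rfl]
    obtain ⟨m, rfl⟩ : ∃ m, n = m + 1 := ⟨n - 1, by omega⟩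
    have h1 := hspan m (by omega)
    simp only [Nat.add_sub_cancel] at ht
    rw [Icc_one_succ, Set.image_insert_eq, Submodule.span_insert, h1, ht, hvn, ← stdSub_succ]
  have hinj : Function.Injective f := LinearMap.injective_iff_surjective.2 hsurj
  let g : GLn n := LinearEquiv.ofBijective f ⟨hinj, hsurj⟩
  have hg : g.toLinearMap = f := by ext; rfl
  refine ⟨g, ⟨?_, ?_⟩, ?_⟩
  · change f _ = _
    rw [hf n (by omega) le_rfl, hvn]
  · rw [hg, hmap _ (by omega), hspan _ le_rfl, ht]
  · funext k
    unfold actFlag EFlag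
    rw [hg, hmap _ (by omega), hspan _ (by omega)]
    by_cases hk : k ≤ n - 1
    · rw [min_eq_left hk]
    · rw [min_eq_right (by omega), hc k (by omega)]

/-- `B_{n-1}·(k·F_y) = B_{n-1}·(k'·F_y)` iff `B_{n-2}·(k⁻¹·E) = B_{n-2}·(k'⁻¹·E)`, and
every `B_{n-2}`-orbit on the complete flags of `U_{n-1}` arises as some `B_{n-2}·(k⁻¹·E)`;
hence `B_{n-1}·(k·F_y) ↦ B_{n-2}·(k⁻¹·E)` is a well-defined bijection from the
`B_{n-1}`-orbits on `K·F_y` onto the `B_{n-2}`-orbits on the complete flags of `U_{n-1}`. -/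
theorem stmt_9 (n : ℕ) (hn : 3 ≤ n) :
    (∀ a ∈ Ksub n, ∀ a' ∈ Ksub n,
      (orbitOf n (BFull n) (actFlag n a (FyFlag n)) =
          orbitOf n (BFull n) (actFlag n a' (FyFlag n)) ↔
        orbitOf n (BSmall n) (actFlag n a.symm (EFlag n)) =
          orbitOf n (BSmall n) (actFlag n a'.symm (EFlag n)))) ∧
    (∀ W, IsFlagOfU n W →
      ∃ a ∈ Ksub n, orbitOf n (BSmall n) (actFlag n a.symm (EFlag n)) =
        orbitOf n (BSmall n) W) := by
  have hF := stab_grp (EFlag n) (BFull_iff (n := n))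
  have hS := stab_grp (FyFlag n) (BSmall_iff hn)
  have hK := K_grp n
  refine ⟨fun a ha a' ha' => ?_, fun W hW => ?_⟩
  · rw [orbit_eq_iff hF, orbit_eq_iff hS]
    constructor
    · rintro ⟨b, hb, h⟩
      have hb' := (BFull_iff b).1 hb
      refine ⟨(a.trans b).trans a'.symm, (BSmall_iff hn _).2
        ⟨hK.trans _ (hK.trans _ ha _ hb'.1) _ (hK.symm _ ha'), ?_⟩, ?_⟩
      · rw [actFlag_trans, actFlag_trans, h, actFlag_eq_symm rfl]
      · have h2 : actFlag n a (actFlag n a.symm (EFlag n)) = EFlag n :=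
          actFlag_eq_symm (g := a.symm) rfl
        rw [actFlag_trans, actFlag_trans, h2, hb'.2]
    · rintro ⟨s, hs, h⟩
      have hs' := (BSmall_iff hn s).1 hs
      refine ⟨(a.symm.trans s).trans a', (BFull_iff _).2
        ⟨hK.trans _ (hK.trans _ (hK.symm _ ha) _ hs'.1) _ ha', ?_⟩, ?_⟩
      · rw [actFlag_trans, actFlag_trans, h]
        exact actFlag_eq_symm (g := a'.symm) rfl
      · rw [actFlag_trans, actFlag_trans, actFlag_eq_symm rfl, hs'.2]
  · obtain ⟨g, hg, h⟩ := exists_K hn W hW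
    refine ⟨g.symm, hK.symm _ hg, ?_⟩
    rw [LinearEquiv.symm_symm, h]
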